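/- Let G = G_m with 18 ≤ m ≤ 27 be a group of Family 8 of order 2^n = 2^{2k+2+ε}, n ≥ 7. (a) If m ∈ {18,19,20,23,24,25} (the cases in which the subgroup A = ⟨x_1,x_2⟩ is abelian), then the number of conjugacy classes of G is |Cl(G)| = 9 + 2^{2k+ε-2}. (b) If m ∈ {21,22,26,27} (the cases in which A is nonabelian), then |Cl(G)| = 9 + 5·2^{2k+ε-5}. -/

import Mathlib

/-!
The number of classes of a finite group `G` is the number of commuting pairs divided by `|G|`.
Put `A = ⟨x1, x2⟩`. The relations make `A` normal with `G ⧸ A` generated by the image of `y`,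
and every element of `A` has the form `x1 ^ i * x2 ^ j`; since `|G| = 2 ^ (2k+2+ε)` is as large
as this allows, the form is unique and `G ⧸ A` is cyclic of order `4` (`exists_grading`,
`Core.modEq`).

Modulo `⟨z1⟩` the subgroup `A` is abelian and `y` acts on it much like multiplication by `i` on a
quotient of `ℤ[i]`: `y ^ 2` acts as inversion up to factors in `⟨z1, z2⟩`. It follows that the
elements of `y A` have centralizer `⟨z1⟩`, of order `2`, in `A`, and those of `y² A` have
centralizer `⟨z1, z2⟩`, of order `4` (`Core.cent1`, `Core.cent2`). The number of commuting pairs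
in a given pair of cosets is unchanged when `(g, h)` is replaced by `(h, g)` or `(g, g * h)`, so
`comm_count` reduces every pair of cosets to `(A, A)`, `(A, y A)` or `(A, y² A)`, giving
`36 |A|` commuting pairs plus those inside `A`. The latter number `|A| ^ 2` if `A` is abelian
and `5 |A| ^ 2 / 8` otherwise (`card_comm_A`); dividing by `|G| = 4 |A|` gives
`9 + |A| / 4` and `9 + 5 |A| / 32`.
-/

open Subgroup Pointwise

/-- the element `z₁` of the group `G_m` of family 8 (`|G| = 2^(2k+2+ε)`) -/
def fam8z1 {G : Type*} [Group G] (k ε : ℕ) (x1 x2 : G) : G :=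
  if ε = 0 then x2 ^ 2 ^ (k - 1) else x1 ^ 2 ^ k

/-- the element `z₂` of the group `G_m` of family 8 -/
def fam8z2 {G : Type*} [Group G] (k ε : ℕ) (x1 x2 : G) : G :=
  if ε = 0 then x1 ^ 2 ^ (k - 1) else x2 ^ 2 ^ (k - 1)

/-- exponent of `z₁` in the parameter `t₁` of `G_m`, `18 ≤ m ≤ 27` -/
def t1e (m : ℕ) : ℕ := if m ∈ ([19, 20, 22, 24, 27] : List ℕ) then 1 else 0

/-- exponent of `z₁` in the parameter `t₂` of `G_m` -/
def t2e1 (m : ℕ) : ℕ := if m ∈ ([20, 23, 25, 27] : List ℕ) then 1 else 0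

/-- exponent of `z₂` in the parameter `t₂` of `G_m` -/
def t2e2 (m : ℕ) : ℕ := if m ∈ ([24, 25, 26, 27] : List ℕ) then 1 else 0

/-- exponent of `z₁` in the parameter `t₃` of `G_m` -/
def t3e (m : ℕ) : ℕ := if m ∈ ([21, 22, 26, 27] : List ℕ) then 1 else 0

/-- `IsFam8 k ε m x1 x2 y` says that the group `G` has order `2^(2k+2+ε)`, is generated by
the listed elements, and that they satisfy the defining relations of the group `G_m` of
family 8 (`18 ≤ m ≤ 27`); since the corresponding presented group has order `2^(2k+2+ε)`,
this holds exactly when `G ≅ G_m`. -/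
def IsFam8 (k ε m : ℕ) {G : Type*} [Group G] (x1 x2 y : G) : Prop :=
  Nat.card G = 2 ^ (2 * k + 2 + ε) ∧
  Subgroup.closure ({x1, x2, y} : Set G) = ⊤ ∧
  x1 ^ 2 ^ (k + ε) = 1 ∧
  x2 ^ 2 ^ k = 1 ∧
  y ^ 4 = fam8z1 k ε x1 x2 ^ t1e m ∧
  y⁻¹ * x1 * y = x1 * x2 ∧
  y⁻¹ * x2 * y = x1⁻¹ ^ 2 * x2⁻¹ * fam8z1 k ε x1 x2 ^ t2e1 m * fam8z2 k ε x1 x2 ^ t2e2 m ∧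
  x1⁻¹ * x2 * x1 = x2 * fam8z1 k ε x1 x2 ^ t3e m


/-! ### Relations in the subgroup generated by `x1` and `x2` -/

/-- The relations on which the count rests, free of the case distinction on `ε`: `z1`, `z2`
are involutions or trivial and centralize `⟨x1, x2⟩`, the commutator of `x1`, `x2` is `z1 ^ c`,
and conjugation by `y`, i.e. `g ↦ y⁻¹ * g * y = MulAut.conj y⁻¹ g`, fixes `z1` and sends `z2`
to `z2 * z1`. The exponents `c`, `e1`, `e2` are those of `z1` in `t₃` and of `z1`, `z2`
in `t₂`. -/
structure Core {G : Type*} [Group G] (c e1 e2 : ℕ) (x1 x2 y z1 z2 : G) : Prop where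
  z1sq : z1 ^ 2 = 1
  z2sq : z2 ^ 2 = 1
  z1x1 : Commute z1 x1
  z1x2 : Commute z1 x2
  z2x1 : Commute z2 x1
  z2x2 : Commute z2 x2
  z1z2 : Commute z1 z2
  z1pow : (∃ n : ℕ, z1 = x1 ^ n) ∨ ∃ n : ℕ, z1 = x2 ^ n
  z2pow : (∃ n : ℕ, z2 = x1 ^ n) ∨ ∃ n : ℕ, z2 = x2 ^ n
  x21 : x2 * x1 = x1 * x2 * z1 ^ c
  x1y : MulAut.conj y⁻¹ x1 = x1 * x2
  x2y : MulAut.conj y⁻¹ x2 = x1⁻¹ ^ 2 * x2⁻¹ * z1 ^ e1 * z2 ^ e2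
  z1y : MulAut.conj y⁻¹ z1 = z1
  z2y : MulAut.conj y⁻¹ z2 = z2 * z1

section Rel
variable {G : Type*} [Group G]

theorem pow_swap {x1 x2 z : G} (h1 : Commute z x1) (h2 : Commute z x2)
    (h : x2 * x1 = x1 * x2 * z) (i j : ℕ) :
    x2 ^ j * x1 ^ i = x1 ^ i * x2 ^ j * z ^ (j * i) := by
  have a : ∀ j : ℕ, x2 ^ j * x1 = x1 * x2 ^ j * z ^ j := by
    intro j
    induction j with
    | zero => simp
    | succ j ih =>
      rw [pow_succ, mul_assoc, h, ← mul_assoc, ← mul_assoc, ih, mul_assoc _ (z ^ j),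
        (h2.pow_left j).eq, pow_succ z]
      simp only [mul_assoc]
  induction i with
  | zero => simp
  | succ i ih =>
    rw [pow_succ, ← mul_assoc, ih, mul_assoc _ (z ^ _), (h1.pow_left _).eq, ← mul_assoc,
      mul_assoc (x1 ^ i), a j, Nat.mul_succ, add_comm (j * i), pow_add z]
    simp only [mul_assoc]

theorem sq_comm {x1 x2 z : G} (h1 : Commute z x1) (h2 : Commute z x2) (hz : z ^ 2 = 1)
    (h : x2 * x1 = x1 * x2 * z) : Commute (x1 ^ 2) x2 ∧ Commute x1 (x2 ^ 2) := by
  constructor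
  · have := pow_swap h1 h2 h 2 1
    simp only [pow_one, one_mul, hz, mul_one] at this
    exact this.symm
  · have := pow_swap h1 h2 h 1 2
    simp only [pow_one, mul_one, hz] at this
    exact this.symm

theorem mul_pow_two_mul {x1 x2 z : G} (h1 : Commute z x1) (h2 : Commute z x2) (hz : z ^ 2 = 1)
    (h : x2 * x1 = x1 * x2 * z) (n : ℕ) :
    (x1 * x2) ^ (2 * n) = x1 ^ (2 * n) * x2 ^ (2 * n) * z ^ n := by
  obtain ⟨h3, h4⟩ := sq_comm h1 h2 hz h
  have : (x1 * x2) ^ 2 = x1 ^ 2 * x2 ^ 2 * z := by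
    rw [pow_two, mul_assoc, ← mul_assoc x2, h, pow_two, pow_two, mul_assoc _ z, h2.eq]
    simp only [mul_assoc]
  rw [pow_mul, this, ((h1.pow_right 2).mul_right (h2.pow_right 2)).symm.mul_pow,
    (h3.pow_right 2).mul_pow, ← pow_mul, ← pow_mul]

theorem pow_even_one {z : G} (hz : z ^ 2 = 1) {n : ℕ} (hn : 2 ∣ n) : z ^ n = 1 := by
  obtain ⟨m, rfl⟩ := hn
  rw [pow_mul, hz, one_pow]

/-- The case `ε = 0`, where `z₁` is a power of `x2` and `z₂` a power of `x1`. -/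
theorem core0 {k c e1 e2 : ℕ} (hk : 3 ≤ k) {x1 x2 y : G}
    (o1 : x1 ^ 2 ^ k = 1) (o2 : x2 ^ 2 ^ k = 1)
    (h1 : y⁻¹ * x1 * y = x1 * x2)
    (h2 : y⁻¹ * x2 * y =
      x1⁻¹ ^ 2 * x2⁻¹ * (x2 ^ 2 ^ (k - 1)) ^ e1 * (x1 ^ 2 ^ (k - 1)) ^ e2)
    (h3 : x1⁻¹ * x2 * x1 = x2 * (x2 ^ 2 ^ (k - 1)) ^ c) :
    Core c e1 e2 x1 x2 y (x2 ^ 2 ^ (k - 1)) (x1 ^ 2 ^ (k - 1)) := by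
  obtain ⟨l, rfl⟩ : ∃ l, k = l + 3 := ⟨k - 3, by omega⟩
  simp only [show l + 3 - 1 = l + 2 by omega] at *
  set z1 := x2 ^ 2 ^ (l + 2) with hz1
  set z2 := x1 ^ 2 ^ (l + 2) with hz2
  have z1sq : z1 ^ 2 = 1 := by rw [hz1, ← pow_mul, ← pow_succ, o2]
  have z2sq : z2 ^ 2 = 1 := by rw [hz2, ← pow_mul, ← pow_succ, o1]
  have z1x2 : Commute z1 x2 := (Commute.refl x2).pow_left _
  have z2x1 : Commute z2 x1 := (Commute.refl x1).pow_left _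
  have x21 : x2 * x1 = x1 * x2 * z1 ^ c := by
    rw [mul_assoc, ← h3]; group
  have z1x1 : Commute z1 x1 := by
    have : x1⁻¹ * z1 * x1 = z1 := by
      have e : x1⁻¹ * z1 * x1 = (x1⁻¹ * x2 * x1) ^ 2 ^ (l + 2) := by
        have := conj_pow (i := 2 ^ (l + 2)) (a := x1⁻¹) (b := x2)
        simpa using this.symm
      rw [e, h3, (z1x2.pow_left c).symm.mul_pow, ← pow_mul,
        pow_even_one z1sq (n := c * 2 ^ (l + 2)) ((dvd_pow_self 2 (by omega)).mul_left c), mul_one]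
    calc z1 * x1 = x1 * (x1⁻¹ * z1 * x1) := by group
      _ = x1 * z1 := by rw [this]
  have zc : (z1 ^ c) ^ 2 = 1 := by rw [← pow_mul, mul_comm, pow_mul, z1sq, one_pow]
  obtain ⟨q1, q2⟩ := sq_comm (z1x1.pow_left c) (z1x2.pow_left c) zc x21
  have hpw : 2 ^ (l + 2) = 2 * 2 ^ (l + 1) := by ring
  have z2x2 : Commute z2 x2 := by
    rw [hz2, hpw, pow_mul]; exact q1.pow_left _
  have x1y : MulAut.conj y⁻¹ x1 = x1 * x2 := by simpa using h1
  have x2y : MulAut.conj y⁻¹ x2 = x1⁻¹ ^ 2 * x2⁻¹ * z1 ^ e1 * z2 ^ e2 := by simpa using h2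
  refine ⟨z1sq, z2sq, z1x1, z1x2, z2x1, z2x2, z1x1.pow_right _, .inr ⟨_, rfl⟩, .inl ⟨_, rfl⟩,
    x21, x1y, x2y, ?_, ?_⟩
  · rw [hz1, map_pow, x2y]
    have d : 2 ∣ 2 ^ (l + 2) := dvd_pow_self 2 (by omega)
    have z12 : Commute z1 z2 := z1x1.pow_right _
    have a1 : Commute (x1⁻¹ ^ 2) x2⁻¹ := by
      rw [inv_pow]; exact q1.inv_left.inv_right
    have a2 : Commute (x1⁻¹ ^ 2 * x2⁻¹) (z1 ^ e1) :=
      (((z1x1.inv_right.pow_right 2).mul_right z1x2.inv_right).pow_left e1).symm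
    have a3 : Commute (x1⁻¹ ^ 2 * x2⁻¹ * z1 ^ e1) (z2 ^ e2) :=
      ((((z2x1.inv_right.pow_right 2).mul_right z2x2.inv_right).mul_right
        (z12.symm.pow_right e1)).pow_left e2).symm
    rw [a3.mul_pow, a2.mul_pow, a1.mul_pow, ← pow_mul z1, ← pow_mul z2, ← pow_mul,
      pow_even_one z1sq (d.mul_left _), pow_even_one z2sq (d.mul_left _), ← pow_succ', inv_pow, o1,
      inv_pow]
    simp only [inv_one, one_mul, mul_one]
    rw [← hz1, inv_eq_iff_mul_eq_one, ← pow_two, z1sq]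
  · rw [hz2, map_pow, x1y, hpw, mul_pow_two_mul (z1x1.pow_left c) (z1x2.pow_left c) zc x21,
      ← hpw, pow_even_one zc (dvd_pow_self 2 (by omega)), mul_one]

/-- The case `ε = 1`, where `z₁` is a power of `x1` and `z₂` a power of `x2`. -/
theorem core1 {k c e1 e2 : ℕ} (hk : 2 ≤ k) {x1 x2 y : G}
    (o1 : x1 ^ 2 ^ (k + 1) = 1) (o2 : x2 ^ 2 ^ k = 1)
    (h1 : y⁻¹ * x1 * y = x1 * x2)
    (h2 : y⁻¹ * x2 * y =
      x1⁻¹ ^ 2 * x2⁻¹ * (x1 ^ 2 ^ k) ^ e1 * (x2 ^ 2 ^ (k - 1)) ^ e2)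
    (h3 : x1⁻¹ * x2 * x1 = x2 * (x1 ^ 2 ^ k) ^ c) :
    Core c e1 e2 x1 x2 y (x1 ^ 2 ^ k) (x2 ^ 2 ^ (k - 1)) := by
  obtain ⟨l, rfl⟩ : ∃ l, k = l + 2 := ⟨k - 2, by omega⟩
  simp only [show l + 2 - 1 = l + 1 by omega] at *
  set z1 := x1 ^ 2 ^ (l + 2) with hz1
  set z2 := x2 ^ 2 ^ (l + 1) with hz2
  have z1sq : z1 ^ 2 = 1 := by rw [hz1, ← pow_mul, ← pow_succ, o1]
  have z2sq : z2 ^ 2 = 1 := by rw [hz2, ← pow_mul, ← pow_succ, o2]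
  have z1x1 : Commute z1 x1 := (Commute.refl x1).pow_left _
  have z2x2 : Commute z2 x2 := (Commute.refl x2).pow_left _
  have x21 : x2 * x1 = x1 * x2 * z1 ^ c := by
    rw [mul_assoc, ← h3]; group
  have zc : (z1 ^ c) ^ 2 = 1 := by rw [← pow_mul, mul_comm, pow_mul, z1sq, one_pow]
  have z1x2 : Commute z1 x2 := by
    have : x2⁻¹ * z1 * x2 = z1 := by
      have e : x2⁻¹ * x1 * x2 = x1 * (z1 ^ c)⁻¹ := by
        rw [eq_mul_inv_iff_mul_eq, mul_assoc, mul_assoc, ← mul_assoc x1, ← x21]; group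
      have e' : x2⁻¹ * z1 * x2 = (x2⁻¹ * x1 * x2) ^ 2 ^ (l + 2) := by
        have := conj_pow (i := 2 ^ (l + 2)) (a := x2⁻¹) (b := x1)
        simpa using this.symm
      rw [e', e, (z1x1.pow_left c).inv_left.symm.mul_pow, inv_pow,
        pow_even_one zc (dvd_pow_self 2 (by omega)), inv_one, mul_one]
    calc z1 * x2 = x2 * (x2⁻¹ * z1 * x2) := by group
      _ = x2 * z1 := by rw [this]
  obtain ⟨q1, q2⟩ := sq_comm (z1x1.pow_left c) (z1x2.pow_left c) zc x21
  have hpw : 2 ^ (l + 1) = 2 * 2 ^ l := by ring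
  have z2x1 : Commute z2 x1 := by
    rw [hz2, hpw, pow_mul]; exact (q2.pow_right _).symm
  have x1y : MulAut.conj y⁻¹ x1 = x1 * x2 := by simpa using h1
  have x2y : MulAut.conj y⁻¹ x2 = x1⁻¹ ^ 2 * x2⁻¹ * z1 ^ e1 * z2 ^ e2 := by simpa using h2
  refine ⟨z1sq, z2sq, z1x1, z1x2, z2x1, z2x2, z1x2.pow_right _, .inl ⟨_, rfl⟩, .inr ⟨_, rfl⟩,
    x21, x1y, x2y, ?_, ?_⟩
  · rw [hz1, map_pow, x1y, show 2 ^ (l + 2) = 2 * 2 ^ (l + 1) by ring,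
      mul_pow_two_mul (z1x1.pow_left c) (z1x2.pow_left c) zc x21,
      show 2 * 2 ^ (l + 1) = 2 ^ (l + 2) by ring, o2,
      pow_even_one zc (dvd_pow_self 2 (by omega)), mul_one, mul_one]
  · rw [hz2, map_pow, x2y]
    have d : 2 ∣ 2 ^ (l + 1) := dvd_pow_self 2 (by omega)
    have z12 : Commute z1 z2 := z1x2.pow_right _
    have a1 : Commute (x1⁻¹ ^ 2) x2⁻¹ := by
      rw [inv_pow]; exact q1.inv_left.inv_right
    have a2 : Commute (x1⁻¹ ^ 2 * x2⁻¹) (z1 ^ e1) :=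
      (((z1x1.inv_right.pow_right 2).mul_right z1x2.inv_right).pow_left e1).symm
    have a3 : Commute (x1⁻¹ ^ 2 * x2⁻¹ * z1 ^ e1) (z2 ^ e2) :=
      ((((z2x1.inv_right.pow_right 2).mul_right z2x2.inv_right).mul_right
        (z12.symm.pow_right e1)).pow_left e2).symm
    rw [a3.mul_pow, a2.mul_pow, a1.mul_pow, ← pow_mul z1, ← pow_mul z2, ← pow_mul,
      pow_even_one z1sq (d.mul_left _), pow_even_one z2sq (d.mul_left _), ← pow_succ', inv_pow,
      inv_pow, ← hz1, ← hz2, inv_eq_of_mul_eq_one_left (by rw [← pow_two, z1sq]),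
      inv_eq_of_mul_eq_one_left (by rw [← pow_two, z2sq]), mul_one, mul_one, z12.eq]

/-! ### Centralizers in `A` of the elements of `y A` and `y² A` -/

/-- The consequences of the uniqueness of the expression `x1 ^ i * x2 ^ j` of an element of
`⟨x1, x2⟩` that are common to both values of `ε`. -/
structure NormalForm {G : Type*} [Group G] (x1 x2 z1 z2 : G) : Prop where
  z1ne : z1 ≠ 1
  par1 : ∀ i j a b : ℕ, x1 ^ (2 * i) * x2 ^ (2 * j) = z1 ^ a * z2 ^ b → 2 ∣ i
  par2 : ∀ i j a : ℕ, x1 ^ (2 * i) * x2 ^ (2 * j) = z1 ^ a → 2 ∣ j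
  par3 : ∀ i j : ℕ, x1 ^ (4 * i) * x2 ^ (4 * j) = 1 →
    ∃ a b : ℕ, x1 ^ (2 * i) * x2 ^ (2 * j) = z1 ^ a * z2 ^ b

namespace Core
variable {c e1 e2 : ℕ} {x1 x2 y z1 z2 : G} (H : Core c e1 e2 x1 x2 y z1 z2)
include H

theorem zc : (z1 ^ c) ^ 2 = 1 := by rw [← pow_mul, mul_comm, pow_mul, H.z1sq, one_pow]

theorem sqs : Commute (x1 ^ 2) x2 ∧ Commute x1 (x2 ^ 2) :=
  sq_comm (H.z1x1.pow_left c) (H.z1x2.pow_left c) H.zc H.x21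

/-- Conjugation by `y ^ 2` inverts `x1` up to the factor `t₂`. -/
theorem yy1 : MulAut.conj y⁻¹ (MulAut.conj y⁻¹ x1) = x1⁻¹ * (z1 ^ e1 * z2 ^ e2) := by
  rw [H.x1y, map_mul, H.x1y, H.x2y]
  have := (H.sqs.1.inv_left.eq)
  rw [inv_pow, ← mul_assoc, ← mul_assoc, ← mul_assoc, mul_assoc x1 x2, ← H.sqs.1.inv_left.eq]
  group

/-- Conjugation by `y ^ 2` inverts `x2` up to a power of `z1`. -/
theorem yy2 : MulAut.conj y⁻¹ (MulAut.conj y⁻¹ x2) = x2⁻¹ * z1 ^ (c + e2) := by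
  have e : x2 = x1⁻¹ * MulAut.conj y⁻¹ x1 := by rw [H.x1y]; group
  have t2y : MulAut.conj y⁻¹ (z1 ^ e1 * z2 ^ e2) = z1 ^ e1 * z2 ^ e2 * z1 ^ e2 := by
    rw [map_mul, map_pow, map_pow, H.z1y, H.z2y, H.z1z2.symm.mul_pow, mul_assoc]
  have f : ∀ g : G, MulAut.conj y⁻¹ (MulAut.conj y⁻¹ (x1⁻¹ * g)) =
      (MulAut.conj y⁻¹ (MulAut.conj y⁻¹ x1))⁻¹ * MulAut.conj y⁻¹ (MulAut.conj y⁻¹ g) := by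
    intro g; rw [← map_inv (MulAut.conj y⁻¹) (MulAut.conj y⁻¹ x1), ← map_inv (MulAut.conj y⁻¹) x1,
      ← map_mul, ← map_mul]
  have g : MulAut.conj y⁻¹ (x1⁻¹ * (z1 ^ e1 * z2 ^ e2)) =
      (x1 * x2)⁻¹ * (z1 ^ e1 * z2 ^ e2 * z1 ^ e2) := by
    rw [← t2y, ← H.x1y, ← map_inv (MulAut.conj y⁻¹) x1, ← map_mul]
  conv_lhs => rw [e, f, H.yy1, g]
  set t := z1 ^ e1 * z2 ^ e2 with ht
  have t1 : Commute t x1 := (H.z1x1.pow_left _).mul_left (H.z2x1.pow_left _)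
  have t2 : Commute t x2 := (H.z1x2.pow_left _).mul_left (H.z2x2.pow_left _)
  have s : (x1 * x2)⁻¹ = z1 ^ c * (x2 * x1)⁻¹ := by
    rw [H.x21]; group
  have t3 : Commute t ((x1 * x2)⁻¹) := (t1.mul_right t2).inv_right
  have c1 : Commute x1 (z1 ^ c) := (H.z1x1.pow_left c).symm
  have c2 : Commute (x2⁻¹) (z1 ^ c) := (H.z1x2.pow_left c).symm.inv_left
  have u : x1 * (x1 * x2)⁻¹ = x2⁻¹ * z1 ^ c := by
    rw [s, ← mul_assoc, c1.eq, c2.eq]; group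
  calc (x1⁻¹ * t)⁻¹ * ((x1 * x2)⁻¹ * (t * z1 ^ e2))
      = t⁻¹ * (x1 * ((x1 * x2)⁻¹ * t)) * z1 ^ e2 := by group
    _ = t⁻¹ * (x1 * (t * (x1 * x2)⁻¹)) * z1 ^ e2 := by rw [t3.eq]
    _ = t⁻¹ * (x1 * t) * (x1 * x2)⁻¹ * z1 ^ e2 := by group
    _ = x1 * (x1 * x2)⁻¹ * z1 ^ e2 := by rw [← t1.eq]; group
    _ = x2⁻¹ * z1 ^ (c + e2) := by rw [u, pow_add, mul_assoc]

theorem mul_nf (i j k l : ℕ) : x1 ^ i * x2 ^ j * (x1 ^ k * x2 ^ l) =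
    x1 ^ (i + k) * x2 ^ (j + l) * (z1 ^ c) ^ (j * k) := by
  rw [mul_assoc, ← mul_assoc (x2 ^ j),
    pow_swap (H.z1x1.pow_left c) (H.z1x2.pow_left c) H.x21, mul_assoc _ _ (x2 ^ l),
    (((H.z1x2.pow_left c).pow_left _).pow_right l).eq]
  simp only [pow_add, mul_assoc]

theorem commute_nf (i j k l : ℕ) (hi : 2 ∣ i) (hj : 2 ∣ j) :
    Commute (x1 ^ i * x2 ^ j) (x1 ^ k * x2 ^ l) := by
  unfold Commute SemiconjBy
  rw [H.mul_nf, H.mul_nf, pow_even_one H.zc (hj.mul_right _), pow_even_one H.zc (hi.mul_left _),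
    add_comm i, add_comm j]

theorem z1inv : z1⁻¹ = z1 := inv_eq_of_mul_eq_one_left (by rw [← pow_two, H.z1sq])

theorem pow_eq_one_iff (N : NormalForm x1 x2 z1 z2) (n : ℕ) : z1 ^ n = 1 ↔ 2 ∣ n := by
  have : orderOf z1 = 2 := orderOf_eq_prime H.z1sq N.z1ne
  rw [← this, orderOf_dvd_iff_pow_eq_one]

theorem commute_nf_iff (N : NormalForm x1 x2 z1 z2) (i j k l : ℕ) :
    Commute (x1 ^ i * x2 ^ j) (x1 ^ k * x2 ^ l) ↔ 2 ∣ c * (j * k + l * i) := by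
  unfold Commute SemiconjBy
  rw [H.mul_nf, H.mul_nf, add_comm i, add_comm j, mul_right_inj, ← H.pow_eq_one_iff N,
    pow_mul z1, pow_add (z1 ^ c), ← eq_inv_iff_mul_eq_one, ← inv_pow, ← inv_pow, H.z1inv]

/-- Natural exponents suffice because the group is finite; a factor `z1 ^ n` is absorbed into
the power of `x1` or of `x2`. -/
theorem mem_nf [Finite G] {a : G} : a ∈ closure ({x1, x2} : Set G) ↔
    ∃ i j : ℕ, a = x1 ^ i * x2 ^ j := by
  have key : ∀ a ∈ closure ({x1, x2} : Set G), ∃ i j n : ℕ, a = x1 ^ i * x2 ^ j * z1 ^ n := by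
    intro a ha
    rw [← mem_toSubmonoid, closure_toSubmonoid_of_finite] at ha
    induction ha using Submonoid.closure_induction with
    | mem x hx =>
      rcases hx with rfl | rfl
      · exact ⟨1, 0, 0, by simp⟩
      · exact ⟨0, 1, 0, by simp⟩
    | one => exact ⟨0, 0, 0, by simp⟩
    | mul a b _ _ ha hb =>
      obtain ⟨i, j, n, rfl⟩ := ha
      obtain ⟨k, l, m, rfl⟩ := hb
      refine ⟨i + k, j + l, c * (j * k) + n + m, ?_⟩
      rw [mul_assoc _ (z1 ^ n), ← mul_assoc (z1 ^ n),
        (((H.z1x1.pow_right k).mul_right (H.z1x2.pow_right l)).pow_left n).eq,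
        mul_assoc _ (z1 ^ n), ← mul_assoc, H.mul_nf, pow_add z1, pow_add z1, pow_mul z1]
      simp only [mul_assoc]
  have m1 : x1 ∈ closure ({x1, x2} : Set G) := subset_closure (by simp)
  have m2 : x2 ∈ closure ({x1, x2} : Set G) := subset_closure (by simp)
  refine ⟨fun ha => ?_, fun ⟨i, j, h⟩ => h ▸ mul_mem (pow_mem m1 i) (pow_mem m2 j)⟩
  obtain ⟨i, j, n, rfl⟩ := key a ha
  rcases H.z1pow with ⟨m, hm⟩ | ⟨m, hm⟩
  · refine ⟨i + m * n, j, ?_⟩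
    rw [mul_assoc, ← ((H.z1x2.pow_left n).pow_right j).eq, hm, ← mul_assoc, ← pow_mul, ← pow_add]
  · refine ⟨i, j + m * n, ?_⟩
    rw [hm, mul_assoc, ← pow_mul, ← pow_add]

theorem z1_mem : z1 ∈ closure ({x1, x2} : Set G) := by
  rcases H.z1pow with ⟨m, hm⟩ | ⟨m, hm⟩
  · exact hm ▸ pow_mem (subset_closure (by simp)) m
  · exact hm ▸ pow_mem (subset_closure (by simp)) m

theorem z2_mem : z2 ∈ closure ({x1, x2} : Set G) := by
  rcases H.z2pow with ⟨m, hm⟩ | ⟨m, hm⟩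
  · exact hm ▸ pow_mem (subset_closure (by simp)) m
  · exact hm ▸ pow_mem (subset_closure (by simp)) m

theorem pow_z1z2 (a b : ℕ) : z1 ^ a * z2 ^ b ∈ ({1, z1, z2, z1 * z2} : Set G) := by
  have h : ∀ z : G, z ^ 2 = 1 → ∀ n : ℕ, z ^ n = 1 ∨ z ^ n = z := by
    intro z hz n
    rcases Nat.even_or_odd' n with ⟨m, rfl | rfl⟩ <;> simp [pow_succ, pow_mul, hz]
  rcases h z1 H.z1sq a with h1 | h1 <;> rcases h z2 H.z2sq b with h2 | h2 <;> simp [h1, h2]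

theorem yy_nf (i j : ℕ) : MulAut.conj y⁻¹ (MulAut.conj y⁻¹ (x1 ^ i * x2 ^ j)) =
    (x1 ^ i)⁻¹ * z2 ^ (e2 * i) * (x2 ^ j)⁻¹ * z1 ^ (e1 * i + (c + e2) * j) := by
  have t1 : Commute (z1 ^ e1 * z2 ^ e2) x1⁻¹ :=
    ((H.z1x1.pow_left _).mul_left (H.z2x1.pow_left _)).inv_right
  rw [map_mul, map_mul, map_pow, map_pow, map_pow, map_pow, H.yy1, H.yy2, t1.symm.mul_pow,
    (H.z1x2.pow_left _).inv_right.symm.mul_pow, ((H.z1z2.pow_left _).pow_right _).mul_pow]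
  simp only [inv_pow, pow_add, pow_mul]
  have a1 : Commute ((z1 ^ e1) ^ i) ((z2 ^ e2) ^ i * (x2 ^ j)⁻¹) :=
    ((((H.z1z2.pow_right e2).pow_right i).mul_right (H.z1x2.pow_right j).inv_right).pow_left
      e1).pow_left i
  calc _ = (x1 ^ i)⁻¹ * ((z1 ^ e1) ^ i * ((z2 ^ e2) ^ i * (x2 ^ j)⁻¹)) * (z1 ^ (c + e2)) ^ j := by
        simp only [mul_assoc, pow_add]
    _ = _ := by rw [a1.eq]; simp only [mul_assoc, pow_add]

/-- An element of `A` that conjugation by `y ^ 2` fixes modulo `⟨z1⟩` lies in `⟨x1 ^ 2, x2 ^ 2⟩`,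
hence in the centre of `A`. -/
theorem even_of_yy (N : NormalForm x1 x2 z1 z2) (i j w : ℕ)
    (h : MulAut.conj y⁻¹ (MulAut.conj y⁻¹ (x1 ^ i * x2 ^ j)) = x1 ^ i * x2 ^ j * z1 ^ w) :
    2 ∣ i ∧ 2 ∣ j := by
  rw [H.yy_nf] at h
  have h' : x1 ^ (2 * i) * x2 ^ (2 * j) = z1 ^ (e1 * i + (c + e2) * j + w) * z2 ^ (e2 * i) := by
    set r := e1 * i + (c + e2) * j
    have k1 : Commute (z1 ^ w) (x2 ^ j) := (H.z1x2.pow_left _).pow_right _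
    have k2 : Commute (z1 ^ r) (x2 ^ j) := (H.z1x2.pow_left _).pow_right _
    have k3 : Commute (z1 ^ (r + w)) (z2 ^ (e2 * i)) := (H.z1z2.pow_left _).pow_right _
    have zw : z1 ^ w * z1 ^ w = 1 := by
      rw [← pow_two, ← pow_mul, mul_comm, pow_mul, H.z1sq, one_pow]
    calc x1 ^ (2 * i) * x2 ^ (2 * j)
        = x1 ^ i * (x1 ^ i * x2 ^ j * (z1 ^ w * z1 ^ w)) * x2 ^ j := by
          rw [zw, two_mul, two_mul, pow_add, pow_add, mul_one]; simp only [mul_assoc]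
      _ = x1 ^ i * (x1 ^ i * x2 ^ j * z1 ^ w) * (z1 ^ w * x2 ^ j) := by simp only [mul_assoc]
      _ = z2 ^ (e2 * i) * ((x2 ^ j)⁻¹ * z1 ^ r * x2 ^ j) * z1 ^ w := by
          rw [← h, k1.eq]; group
      _ = z2 ^ (e2 * i) * z1 ^ (r + w) := by
          rw [mul_assoc (x2 ^ j)⁻¹, k2.eq, inv_mul_cancel_left, mul_assoc, ← pow_add z1 r w]
      _ = _ := k3.eq.symm
  have hi := N.par1 _ _ _ _ h'
  rw [pow_even_one H.z2sq (hi.mul_left _), mul_one] at h'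
  exact ⟨hi, N.par2 _ _ _ h'⟩

omit H in
theorem commute_y (g : G) : Commute g y ↔ MulAut.conj y⁻¹ g = g := by
  rw [MulAut.conj_apply, inv_inv, mul_assoc, inv_mul_eq_iff_eq_mul]
  rfl

theorem commute_z1_nf (i j : ℕ) : Commute z1 (x1 ^ i * x2 ^ j) :=
  (H.z1x1.pow_right i).mul_right (H.z1x2.pow_right j)

theorem commute_z2_nf (i j : ℕ) : Commute z2 (x1 ^ i * x2 ^ j) :=
  (H.z2x1.pow_right i).mul_right (H.z2x2.pow_right j)

theorem exists_mul_comm (i j k l : ℕ) : ∃ w : ℕ,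
    x1 ^ k * x2 ^ l * (x1 ^ i * x2 ^ j) = x1 ^ i * x2 ^ j * (x1 ^ k * x2 ^ l) * z1 ^ w := by
  refine ⟨c * (j * k) + c * (l * i), ?_⟩
  rw [H.mul_nf, H.mul_nf, add_comm k, add_comm l, pow_add z1, pow_mul z1, pow_mul z1,
    mul_assoc _ _ (_ * _), ← mul_assoc ((z1 ^ c) ^ (j * k)), ← pow_two, pow_right_comm (z1 ^ c),
    H.zc, one_pow, one_mul]

theorem exists_conj_eq (i j k l : ℕ) : ∃ w : ℕ,
    x1 ^ k * x2 ^ l * (x1 ^ i * x2 ^ j) * (x1 ^ k * x2 ^ l)⁻¹ = x1 ^ i * x2 ^ j * z1 ^ w := by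
  obtain ⟨w, hw⟩ := H.exists_mul_comm i j k l
  refine ⟨w, ?_⟩
  rw [hw, mul_inv_eq_iff_eq_mul, mul_assoc, mul_assoc _ (z1 ^ w),
    ((H.commute_z1_nf k l).pow_left w).eq]

/-- Every element of the coset `y² A` has centralizer `⟨z1, z2⟩` in `A`. Conjugation by
`b ∈ A` moves an element of `A` only by a power of `z1`, so an element `a` of this centralizer
is fixed by `y ^ 2` modulo `⟨z1⟩`; hence `a` is central in `A` and `a = a⁻¹`. -/
theorem cent2 [Finite G] (N : NormalForm x1 x2 z1 z2) (b : G)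
    (hb : b ∈ closure ({x1, x2} : Set G)) (a : G) :
    a ∈ closure ({x1, x2} : Set G) ∧ Commute a (y * (y * b)) ↔
      a ∈ ({1, z1, z2, z1 * z2} : Set G) := by
  obtain ⟨k, l, rfl⟩ := H.mem_nf.1 hb
  constructor
  · rintro ⟨ha, hc⟩
    obtain ⟨i, j, rfl⟩ := H.mem_nf.1 ha
    have e : MulAut.conj y⁻¹ (MulAut.conj y⁻¹ (x1 ^ i * x2 ^ j)) =
        x1 ^ k * x2 ^ l * (x1 ^ i * x2 ^ j) * (x1 ^ k * x2 ^ l)⁻¹ := by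
      have := hc.eq
      simp only [MulAut.conj_apply, inv_inv]
      calc y⁻¹ * (y⁻¹ * (x1 ^ i * x2 ^ j) * y) * y
          = y⁻¹ * y⁻¹ * (x1 ^ i * x2 ^ j * (y * (y * (x1 ^ k * x2 ^ l)))) *
            (x1 ^ k * x2 ^ l)⁻¹ := by group
        _ = _ := by rw [this]; group
    obtain ⟨hi, hj⟩ : 2 ∣ i ∧ 2 ∣ j := by
      obtain ⟨w, hw⟩ := H.exists_conj_eq i j k l
      exact H.even_of_yy N i j w (e.trans hw)
    rw [← (H.commute_nf i j k l hi hj).eq, mul_inv_cancel_right, H.yy_nf] at e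
    rw [pow_even_one H.z2sq (hi.mul_left _),
      pow_even_one H.z1sq (dvd_add (hi.mul_left _) (hj.mul_left _)), mul_one, mul_one] at e
    obtain ⟨i, rfl⟩ := hi
    obtain ⟨j, rfl⟩ := hj
    obtain ⟨p, q, hpq⟩ := N.par3 i j (by
      calc x1 ^ (4 * i) * x2 ^ (4 * j)
          = x1 ^ (2 * i) * (x1 ^ (2 * i) * x2 ^ (2 * j)) * x2 ^ (2 * j) := by
            rw [show 4 * i = 2 * i + 2 * i by ring, show 4 * j = 2 * j + 2 * j by ring,
              pow_add, pow_add]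
            simp only [mul_assoc]
        _ = 1 := by rw [← e]; group)
    rw [hpq]
    exact H.pow_z1z2 p q
  · have h1 : Commute z1 y := (commute_y z1).2 H.z1y
    have h2 : Commute z2 (y * y) := by
      have : MulAut.conj y⁻¹ (MulAut.conj y⁻¹ z2) = z2 := by
        rw [H.z2y, map_mul, H.z1y, H.z2y, mul_assoc, ← pow_two, H.z1sq, mul_one]
      apply (commute_y _).2
      rwa [mul_inv_rev, map_mul]
    have g1 : Commute z1 (y * (y * (x1 ^ k * x2 ^ l))) :=
      h1.mul_right (h1.mul_right (H.commute_z1_nf k l))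
    have g2 : Commute z2 (y * (y * (x1 ^ k * x2 ^ l))) := by
      rw [← mul_assoc]
      exact h2.mul_right (H.commute_z2_nf k l)
    rintro (rfl | rfl | rfl | rfl)
    · exact ⟨one_mem _, Commute.one_left _⟩
    · exact ⟨H.z1_mem, g1⟩
    · exact ⟨H.z2_mem, g2⟩
    · exact ⟨mul_mem H.z1_mem H.z2_mem, g1.mul_left g2⟩

/-- Every element of the coset `y A` has centralizer `⟨z1⟩` in `A`: as in `cent2` the
centralizing elements are central in `A`, so they commute with `y`, and `y` moves `z2`. -/
theorem cent1 [Finite G] (N : NormalForm x1 x2 z1 z2) (b : G)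
    (hb : b ∈ closure ({x1, x2} : Set G)) (a : G) :
    a ∈ closure ({x1, x2} : Set G) ∧ Commute a (y * b) ↔ a ∈ ({1, z1} : Set G) := by
  obtain ⟨k, l, rfl⟩ := H.mem_nf.1 hb
  have h1 : Commute z1 y := (commute_y z1).2 H.z1y
  have n2 : ¬ Commute z2 y := fun h => by
    have := (commute_y z2).1 h
    rw [H.z2y, mul_eq_left] at this
    exact N.z1ne this
  constructor
  · rintro ⟨ha, hc⟩
    obtain ⟨i, j, rfl⟩ := H.mem_nf.1 ha
    have e : MulAut.conj y⁻¹ (x1 ^ i * x2 ^ j) =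
        x1 ^ k * x2 ^ l * (x1 ^ i * x2 ^ j) * (x1 ^ k * x2 ^ l)⁻¹ := by
      have := hc.eq
      simp only [MulAut.conj_apply, inv_inv]
      calc y⁻¹ * (x1 ^ i * x2 ^ j) * y
          = y⁻¹ * (x1 ^ i * x2 ^ j * (y * (x1 ^ k * x2 ^ l))) * (x1 ^ k * x2 ^ l)⁻¹ := by group
        _ = _ := by rw [this]; group
    obtain ⟨hi, hj⟩ : 2 ∣ i ∧ 2 ∣ j := by
      obtain ⟨w, hw⟩ := H.exists_conj_eq i j k l
      apply H.even_of_yy N i j (w + w)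
      rw [e, hw, map_mul, map_pow, H.z1y, e, hw, mul_assoc, ← pow_add]
    rw [← (H.commute_nf i j k l hi hj).eq, mul_inv_cancel_right, ← commute_y] at e
    have := (H.cent2 N 1 (one_mem _) (x1 ^ i * x2 ^ j)).1
      ⟨ha, e.mul_right (e.mul_right (Commute.one_right _))⟩
    rcases this with h | h | h | h
    · simp [h]
    · simp [h]
    · exact absurd (h ▸ e) n2
    · have e' : Commute (z1 * z2) y := h ▸ e
      have := h1.inv_left.mul_left e'
      rw [inv_mul_cancel_left] at this
      exact absurd this n2
  · rintro (rfl | rfl)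
    · exact ⟨one_mem _, Commute.one_left _⟩
    · exact ⟨H.z1_mem, h1.mul_right (H.commute_z1_nf k l)⟩

theorem z2ne (N : NormalForm x1 x2 z1 z2) : z2 ≠ 1 ∧ z2 ≠ z1 := by
  have h := H.z2y
  constructor
  · rintro rfl
    rw [map_one, one_mul] at h
    exact N.z1ne h.symm
  · rintro rfl
    rw [H.z1y, left_eq_mul] at h
    exact N.z1ne h

omit H in
theorem ncard_two (N : NormalForm x1 x2 z1 z2) : ({1, z1} : Set G).ncard = 2 :=
  Set.ncard_pair N.z1ne.symm

theorem ncard_four (N : NormalForm x1 x2 z1 z2) :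
    ({1, z1, z2, z1 * z2} : Set G).ncard = 4 := by
  obtain ⟨h1, h2⟩ := H.z2ne N
  have h3 : z1 * z2 ≠ 1 := fun h => h2 (by rw [← inv_eq_of_mul_eq_one_right h, H.z1inv])
  rw [Set.ncard_insert_of_notMem, Set.ncard_insert_of_notMem, Set.ncard_pair]
  · simpa using N.z1ne
  · simp [h2.symm, h1]
  · simp [N.z1ne.symm, h1.symm, h3.symm]

end Core

/-! ### Cosets of `A` and commuting pairs -/

namespace Core
variable {c e1 e2 : ℕ} {x1 x2 y z1 z2 : G} (H : Core c e1 e2 x1 x2 y z1 z2)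
include H

theorem normal [Finite G] (hgen : closure ({x1, x2, y} : Set G) = ⊤) :
    (closure ({x1, x2} : Set G)).Normal := by
  set A := closure ({x1, x2} : Set G) with hA
  have m1 : x1 ∈ A := subset_closure (by simp)
  have m2 : x2 ∈ A := subset_closure (by simp)
  rw [← normalizer_eq_top_iff, eq_top_iff, ← hgen, closure_le]
  have hy : y⁻¹ ∈ normalizer (A : Set G) := by
    refine mem_normalizer_fintype fun n hn => ?_
    have : A ≤ A.comap (MulAut.conj y⁻¹).toMonoidHom := by
      rw [hA, closure_le]
      rintro x (rfl | rfl)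
      · change MulAut.conj y⁻¹ x ∈ A
        rw [H.x1y]; exact mul_mem m1 m2
      · change MulAut.conj y⁻¹ x ∈ A
        rw [H.x2y]
        exact mul_mem (mul_mem (mul_mem (pow_mem (inv_mem m1) _) (inv_mem m2))
          (pow_mem H.z1_mem _)) (pow_mem H.z2_mem _)
    exact this hn
  rintro x (rfl | rfl | rfl)
  · exact le_normalizer m1
  · exact le_normalizer m2
  · simpa using inv_mem hy

end Core

/-- The grading of `G` by `G ⧸ A ≃ ZMod 4`, normalised so that `y` has degree `1`. The bound
on `|A|` gives index at least `4`, while `G ⧸ A` is generated by the image of `y`. -/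
theorem exists_grading [Finite G] {A : Subgroup G} [A.Normal] {x1 x2 y : G}
    (hA : A = closure {x1, x2}) (hgen : closure ({x1, x2, y} : Set G) = ⊤) (hy4 : y ^ 4 ∈ A)
    (hcard : 4 * Nat.card A ≤ Nat.card G) :
    Nat.card G = 4 * Nat.card A ∧ ∃ χ : G → ZMod 4, (∀ g h, χ (g * h) = χ g + χ h) ∧
      (∀ g, χ g = 0 ↔ g ∈ A) ∧ χ y = 1 := by
  let q : Additive (G ⧸ A) := Additive.ofMul (y : G ⧸ A)
  have hq : (4 : ℤ) • q = 0 := by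
    have : ((y ^ 4 : G) : G ⧸ A) = 1 := (QuotientGroup.eq_one_iff _).2 hy4
    have h2 : Additive.ofMul ((y ^ 4 : G) : G ⧸ A) = 0 := by rw [this]; rfl
    exact_mod_cast h2
  let f : ZMod 4 →+ Additive (G ⧸ A) := ZMod.lift 4 ⟨zmultiplesHom _ q, by simpa using hq⟩
  have f1 : f 1 = q := by
    have := ZMod.lift_coe 4 ⟨zmultiplesHom _ q, by simpa using hq⟩ 1
    simpa using this
  have fs : Function.Surjective f := by
    let F : Subgroup G := (AddSubgroup.toSubgroup' f.range).comap (QuotientGroup.mk' A)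
    have hF : ∀ g : G, g ∈ F ↔ ∃ i, f i = Additive.ofMul (g : G ⧸ A) := fun g => Iff.rfl
    have : F = ⊤ := by
      rw [eq_top_iff, ← hgen, closure_le]
      have z : ∀ x ∈ A, x ∈ F := by
        intro x hx
        rw [hF]
        exact ⟨0, by rw [map_zero, (QuotientGroup.eq_one_iff x).2 hx]; rfl⟩
      rintro x (rfl | rfl | rfl)
      · exact z _ (hA ▸ subset_closure (by simp))
      · exact z _ (hA ▸ subset_closure (by simp))
      · exact (hF _).2 ⟨1, f1⟩
    intro b
    obtain ⟨g, hg⟩ := QuotientGroup.mk_surjective b.toMul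
    obtain ⟨i, hi⟩ := (hF g).1 (this ▸ mem_top g)
    exact ⟨i, hi.trans (by rw [hg]; rfl)⟩
  have hidx : A.index ≤ 4 := by
    have := Nat.card_le_card_of_surjective f fs
    rwa [Nat.card_zmod] at this
  have hmul := A.card_mul_index
  have hpos : 0 < Nat.card A := Nat.card_pos
  have hidx4 : A.index = 4 := by
    refine le_antisymm hidx ?_
    rw [← hmul] at hcard
    nlinarith
  refine ⟨by rw [← hmul, hidx4, mul_comm], ?_⟩
  have fb : Function.Bijective f := by
    refine (Nat.bijective_iff_surjective_and_card f).2 ⟨fs, ?_⟩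
    rw [Nat.card_zmod]; exact hidx4.symm
  let E := (AddEquiv.ofBijective f fb).symm
  refine ⟨fun g => E (Additive.ofMul (g : G ⧸ A)), ?_, ?_, ?_⟩
  · intro g h
    rw [← map_add]; rfl
  · intro g
    rw [← QuotientGroup.eq_one_iff g, AddEquiv.map_eq_zero_iff]
    rfl
  · rw [AddEquiv.symm_apply_eq]
    exact f1.symm

/-- Counting commuting pairs by degree. The number `N i j` of commuting pairs of degrees `(i, j)`
is invariant under `(g, h) ↦ (h, g)` and `(g, h) ↦ (g, g * h)`, so it depends only on the orbit
of `(i, j)` under `GL₂(ℤ/4)`: twelve pairs are equivalent to `(0, 1)`, three to `(0, 2)`, and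
`(0, 0)` is alone. Thus `36 = 12 * 2 + 3 * 4`. -/
theorem comm_count [Finite G] (χ : G → ZMod 4) (hχ : ∀ g h, χ (g * h) = χ g + χ h)
    {y : G} (hy : χ y = 1) {A : Subgroup G} (hA : ∀ g, χ g = 0 ↔ g ∈ A)
    (h1 : ∀ h, χ h = 1 → Nat.card {a // χ a = 0 ∧ Commute a h} = 2)
    (h2 : ∀ h, χ h = 2 → Nat.card {a // χ a = 0 ∧ Commute a h} = 4) :
    Nat.card {p : G × G // Commute p.1 p.2} =
      36 * Nat.card A + Nat.card {p : A × A // Commute p.1 p.2} := by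
  classical
  let N : ZMod 4 → ZMod 4 → ℕ := fun i j =>
    Nat.card {p : G × G // Commute p.1 p.2 ∧ χ p.1 = i ∧ χ p.2 = j}
  have total : Nat.card {p : G × G // Commute p.1 p.2} = ∑ i, ∑ j, N i j := by
    rw [← Fintype.sum_prod_type', Nat.card_congr (Equiv.sigmaFiberEquiv
      (fun p : {p : G × G // Commute p.1 p.2} => (χ p.1.1, χ p.1.2))).symm, Nat.card_sigma]
    refine Finset.sum_congr rfl fun ij _ => Nat.card_congr ?_
    exact (Equiv.subtypeSubtypeEquivSubtypeInter (fun p : G × G => Commute p.1 p.2)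
      (fun p => (χ p.1, χ p.2) = ij)).trans
      (Equiv.subtypeEquivRight fun p => by rw [Prod.ext_iff])
  have sw : ∀ i j, N i j = N j i := fun i j =>
    Nat.card_congr ((Equiv.prodComm G G).subtypeEquiv fun p => by
      simp [Commute.symm_iff (a := p.1), and_comm])
  have sh : ∀ i j, N i j = N i (i + j) := fun i j =>
    Nat.card_congr ((Equiv.prodShear (Equiv.refl G) Equiv.mulLeft).subtypeEquiv fun p => by
      have : Commute p.1 (p.1 * p.2) ↔ Commute p.1 p.2 := by
        unfold Commute SemiconjBy
        rw [mul_assoc, mul_right_inj]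
      simp only [Equiv.prodShear_apply, Equiv.refl_apply, Equiv.coe_mulLeft, this, hχ]
      constructor
      · rintro ⟨a, rfl, rfl⟩; exact ⟨a, rfl, rfl⟩
      · rintro ⟨a, rfl, b⟩; exact ⟨a, rfl, add_left_cancel b⟩)
  have fib : ∀ i : ZMod 4, Nat.card {h // χ h = i} = Nat.card A := by
    intro i
    have hyi : ∀ n : ℕ, χ (y ^ n) = n := by
      intro n
      induction n with
      | zero => simpa using (hA 1).2 A.one_mem
      | succ n ih => rw [pow_succ, hχ, ih, hy]; simp
    refine Nat.card_congr ((Equiv.mulLeft (y ^ i.val)).subtypeEquiv fun g => ?_).symm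
    rw [← hA, Equiv.coe_mulLeft, hχ, hyi, ZMod.natCast_zmod_val, add_eq_left]
  have key : ∀ j n, (∀ h, χ h = j → Nat.card {a // χ a = 0 ∧ Commute a h} = n) →
      N 0 j = n * Nat.card A := by
    intro j n h
    have e : {p : G × G // Commute p.1 p.2 ∧ χ p.1 = 0 ∧ χ p.2 = j} ≃
        Σ h : {h // χ h = j}, {a // χ a = 0 ∧ Commute a h.1} :=
      { toFun := fun p => ⟨⟨p.1.2, p.2.2.2⟩, ⟨p.1.1, p.2.2.1, p.2.1⟩⟩
        invFun := fun s => ⟨(s.2.1, s.1.1), s.2.2.2, s.2.2.1, s.1.2⟩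
        left_inv := fun _ => rfl
        right_inv := fun _ => rfl }
    have : Fintype {h // χ h = j} := Fintype.ofFinite _
    change Nat.card _ = _
    rw [Nat.card_congr e, Nat.card_sigma, Finset.sum_congr rfl (fun x _ => h x.1 x.2),
      Finset.sum_const, Finset.card_univ, ← Nat.card_eq_fintype_card, fib, smul_eq_mul, mul_comm]
  have k1 := key 1 2 h1
  have k2 := key 2 4 h2
  have k0 : N 0 0 = Nat.card {p : A × A // Commute p.1 p.2} := by
    refine Nat.card_congr
      { toFun := fun p => ⟨(⟨p.1.1, (hA _).1 p.2.2.1⟩, ⟨p.1.2, (hA _).1 p.2.2.2⟩),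
          Subtype.ext p.2.1.eq⟩
        invFun := fun s => ⟨(s.1.1, s.1.2), congrArg Subtype.val s.2.eq, (hA _).2 s.1.1.2,
          (hA _).2 s.1.2.2⟩
        left_inv := fun _ => rfl
        right_inv := fun _ => rfl }
  -- these instances carry every `N i j` to `N 0 0`, `N 0 1` or `N 0 2`
  have a10 := sw 1 0
  have a11 := sh 1 0
  have a12 := sh 1 1
  have a13 := sh 1 2
  have a21 := sw 2 1
  have a23 := sh 2 1
  have a31 := sw 3 1
  have a32 := sw 3 2
  have a30 := sh 3 1
  have a33 := sh 3 0
  have a03 := sw 0 3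
  have a20 := sw 2 0
  have a22 := sh 2 0
  rw [total]
  have u : ∀ g : ZMod 4 → ℕ, ∑ i, g i = g 0 + g 1 + g 2 + g 3 := fun g => Fin.sum_univ_four g
  simp only [u]
  simp only [show (1 : ZMod 4) + 0 = 1 from rfl, show (1 : ZMod 4) + 1 = 2 from rfl,
    show (1 : ZMod 4) + 2 = 3 from rfl, show (2 : ZMod 4) + 1 = 3 from rfl,
    show (3 : ZMod 4) + 1 = 0 from rfl, show (3 : ZMod 4) + 0 = 3 from rfl,
    show (2 : ZMod 4) + 0 = 2 from rfl] at *
  omega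

/-! ### Uniqueness of the normal form -/

namespace Core
variable {c e1 e2 : ℕ} {x1 x2 y z1 z2 : G} (H : Core c e1 e2 x1 x2 y z1 z2)
include H

theorem surj [Finite G] {P Q : ℕ} (hP : 0 < P) (hQ : 0 < Q) (o1 : x1 ^ P = 1) (o2 : x2 ^ Q = 1) :
    Function.Surjective (fun s : Fin P × Fin Q =>
      (⟨x1 ^ s.1.val * x2 ^ s.2.val, H.mem_nf.2 ⟨_, _, rfl⟩⟩ : closure ({x1, x2} : Set G))) := by
  rintro ⟨a, ha⟩
  obtain ⟨i, j, rfl⟩ := H.mem_nf.1 ha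
  refine ⟨(⟨i % P, Nat.mod_lt _ hP⟩, ⟨j % Q, Nat.mod_lt _ hQ⟩), Subtype.ext ?_⟩
  simp only
  rw [← pow_eq_pow_mod i o1, ← pow_eq_pow_mod j o2]

theorem card_le [Finite G] {P Q : ℕ} (hP : 0 < P) (hQ : 0 < Q) (o1 : x1 ^ P = 1)
    (o2 : x2 ^ Q = 1) : Nat.card (closure ({x1, x2} : Set G)) ≤ P * Q := by
  simpa using Nat.card_le_card_of_surjective _ (H.surj hP hQ o1 o2)

theorem bij [Finite G] {P Q : ℕ} (hP : 0 < P) (hQ : 0 < Q) (o1 : x1 ^ P = 1) (o2 : x2 ^ Q = 1)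
    (hc : Nat.card (closure ({x1, x2} : Set G)) = P * Q) :
    Function.Bijective (fun s : Fin P × Fin Q =>
      (⟨x1 ^ s.1.val * x2 ^ s.2.val, H.mem_nf.2 ⟨_, _, rfl⟩⟩ : closure ({x1, x2} : Set G))) :=
  (Nat.bijective_iff_surjective_and_card _).2 ⟨H.surj hP hQ o1 o2, by simp [hc]⟩

theorem modEq [Finite G] {P Q : ℕ} (hP : 0 < P) (hQ : 0 < Q) (o1 : x1 ^ P = 1) (o2 : x2 ^ Q = 1)
    (hc : Nat.card (closure ({x1, x2} : Set G)) = P * Q) {i j k l : ℕ}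
    (h : x1 ^ i * x2 ^ j = x1 ^ k * x2 ^ l) : i ≡ k [MOD P] ∧ j ≡ l [MOD Q] := by
  have := (H.bij hP hQ o1 o2 hc).1
    (a₁ := (⟨i % P, Nat.mod_lt _ hP⟩, ⟨j % Q, Nat.mod_lt _ hQ⟩))
    (a₂ := (⟨k % P, Nat.mod_lt _ hP⟩, ⟨l % Q, Nat.mod_lt _ hQ⟩)) (Subtype.ext (by
      simp only
      rw [← pow_eq_pow_mod i o1, ← pow_eq_pow_mod j o2, ← pow_eq_pow_mod k o1,
        ← pow_eq_pow_mod l o2, h]))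
  simpa [Prod.ext_iff, Nat.ModEq] using this

end Core

theorem two_dvd_of_modEq {i b n : ℕ} (h : 2 * i ≡ b [MOD n]) (hb : 4 ∣ b) (hM : 4 ∣ n) :
    2 ∣ i := by
  have h1 := h.of_dvd hM
  have h2 := h1.trans (Nat.modEq_zero_iff_dvd.2 hb)
  have h3 := Nat.modEq_zero_iff_dvd.1 h2
  omega

/-- The case `ε = 0`, with `M = 2 ^ (k - 1)`. -/
theorem nf0 [Finite G] {M c e1 e2 : ℕ} {x1 x2 y : G} (H : Core c e1 e2 x1 x2 y (x2 ^ M) (x1 ^ M))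
    (hM : 0 < M) (h4 : 4 ∣ M) (o1 : x1 ^ (2 * M) = 1) (o2 : x2 ^ (2 * M) = 1)
    (hc : Nat.card (closure ({x1, x2} : Set G)) = 2 * M * (2 * M)) :
    NormalForm x1 x2 (x2 ^ M) (x1 ^ M) := by
  have me := @Core.modEq _ _ _ _ _ _ _ _ _ _ H _ _ _ (show 0 < 2 * M by omega)
    (show 0 < 2 * M by omega) o1 o2 hc
  have h8 : 4 ∣ 2 * M := h4.mul_left 2
  refine ⟨fun h => ?_, fun i j a b h => ?_, fun i j a h => ?_, fun i j h => ?_⟩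
  · have := (me (i := 0) (j := M) (k := 0) (l := 0) (by simpa using h)).2
    have := Nat.le_of_dvd hM (Nat.modEq_zero_iff_dvd.1 this)
    omega
  · rw [((H.z1z2.pow_left a).pow_right b).eq, ← pow_mul, ← pow_mul] at h
    exact two_dvd_of_modEq (me h).1 (h4.mul_right b) h8
  · rw [← pow_mul, ← one_mul (x2 ^ (M * a)), ← pow_zero x1] at h
    exact two_dvd_of_modEq (me h).2 (h4.mul_right a) h8
  · obtain ⟨p, q⟩ := me (i := 4 * i) (j := 4 * j) (k := 0) (l := 0) (by simpa using h)
    obtain ⟨p, hp⟩ := Nat.modEq_zero_iff_dvd.1 p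
    obtain ⟨q, hq⟩ := Nat.modEq_zero_iff_dvd.1 q
    refine ⟨q, p, ?_⟩
    rw [((H.z1z2.pow_left q).pow_right p).eq, ← pow_mul, ← pow_mul,
      show 2 * i = M * p by linarith, show 2 * j = M * q by linarith]

/-- The case `ε = 1`, with `M = 2 ^ (k - 1)`. -/
theorem nf1 [Finite G] {M c e1 e2 : ℕ} {x1 x2 y : G}
    (H : Core c e1 e2 x1 x2 y (x1 ^ (2 * M)) (x2 ^ M))
    (hM : 0 < M) (h2 : 2 ∣ M) (o1 : x1 ^ (4 * M) = 1) (o2 : x2 ^ (2 * M) = 1)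
    (hc : Nat.card (closure ({x1, x2} : Set G)) = 4 * M * (2 * M)) :
    NormalForm x1 x2 (x1 ^ (2 * M)) (x2 ^ M) := by
  have me := @Core.modEq _ _ _ _ _ _ _ _ _ _ H _ _ _ (show 0 < 4 * M by omega)
    (show 0 < 2 * M by omega) o1 o2 hc
  have h4 : 4 ∣ 2 * M := by omega
  refine ⟨fun h => ?_, fun i j a b h => ?_, fun i j a h => ?_, fun i j h => ?_⟩
  · have := (me (i := 2 * M) (j := 0) (k := 0) (l := 0) (by simpa using h)).1
    have := Nat.le_of_dvd (by omega) (Nat.modEq_zero_iff_dvd.1 this)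
    omega
  · rw [← pow_mul, ← pow_mul] at h
    exact two_dvd_of_modEq (me h).1 (h4.mul_right a) (Dvd.intro _ rfl)
  · rw [← pow_mul, ← mul_one (x1 ^ (2 * M * a)), ← pow_zero x2] at h
    exact two_dvd_of_modEq (me h).2 (dvd_zero 4) h4
  · obtain ⟨p, q⟩ := me (i := 4 * i) (j := 4 * j) (k := 0) (l := 0) (by simpa using h)
    obtain ⟨p, hp⟩ := Nat.modEq_zero_iff_dvd.1 p
    obtain ⟨q, hq⟩ := Nat.modEq_zero_iff_dvd.1 q
    refine ⟨p, q, ?_⟩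
    rw [← pow_mul, ← pow_mul,
      show 2 * i = 2 * M * p by linarith, show 2 * j = M * q by linarith]

/-! ### Commuting pairs in `A` and the class number -/

/-- Whether two elements of `A` commute depends only on the parities of their four exponents;
of the `16` parity patterns all (`c = 0`) or `10` (`c = 1`) give commuting pairs. -/
theorem card_comm_A [Finite G] {c e1 e2 : ℕ} {x1 x2 y z1 z2 : G}
    (H : Core c e1 e2 x1 x2 y z1 z2) (N : NormalForm x1 x2 z1 z2) {P Q : ℕ} (hP : 0 < P)
    (hQ : 0 < Q) (o1 : x1 ^ (P * 2) = 1) (o2 : x2 ^ (Q * 2) = 1)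
    (hc : Nat.card (closure ({x1, x2} : Set G)) = (P * 2) * (Q * 2)) (hc1 : c ≤ 1) :
    Nat.card {p : closure ({x1, x2} : Set G) × closure ({x1, x2} : Set G) // Commute p.1 p.2} =
      (P * Q) ^ 2 * (if c = 0 then 16 else 10) := by
  let E := Equiv.ofBijective _ (H.bij (by omega) (by omega) o1 o2 hc)
  -- parities of the exponents of `x1` and `x2` in each of the two elements
  let R : (Fin 2 × Fin 2) × (Fin 2 × Fin 2) → Prop := fun t =>
    2 ∣ c * (t.1.2.val * t.2.1.val + t.2.2.val * t.1.1.val)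
  let B := (Fin P × Fin Q) × (Fin 2 × Fin 2)
  let F : B ≃ closure ({x1, x2} : Set G) :=
    (Equiv.prodProdProdComm _ _ _ _).trans
      ((Equiv.prodCongr finProdFinEquiv finProdFinEquiv).trans E)
  have hF : ∀ s t : B, Commute (F s) (F t) ↔ R (s.2, t.2) := by
    rintro ⟨⟨i, j⟩, i0, j0⟩ ⟨⟨k, l⟩, k0, l0⟩
    have : Commute (F ((i, j), i0, j0)) (F ((k, l), k0, l0)) ↔
        Commute (x1 ^ (i0.val + 2 * i.val) * x2 ^ (j0.val + 2 * j.val))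
          (x1 ^ (k0.val + 2 * k.val) * x2 ^ (l0.val + 2 * l.val)) :=
      ⟨fun h => congrArg Subtype.val h.eq, fun h => Subtype.ext h.eq⟩
    rw [this, H.commute_nf_iff N]
    change _ ↔ 2 ∣ c * (j0.val * k0.val + l0.val * i0.val)
    have e : c * ((j0.val + 2 * j.val) * (k0.val + 2 * k.val) +
        (l0.val + 2 * l.val) * (i0.val + 2 * i.val)) = c * (j0.val * k0.val + l0.val * i0.val) +
        2 * (c * (j0.val * k.val + j.val * k0.val + 2 * j.val * k.val + l0.val * i.val +
          l.val * i0.val + 2 * l.val * i.val)) := by ring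
    rw [e, Nat.dvd_add_left (Dvd.intro _ rfl)]
  let T := ((Fin P × Fin Q) × (Fin P × Fin Q)) × {t // R t}
  have e : {p : closure ({x1, x2} : Set G) × closure ({x1, x2} : Set G) // Commute p.1 p.2} ≃ T :=
    ((Equiv.prodCongr F F).subtypeEquiv (fun s => (hF s.1 s.2).symm)).symm.trans
      { toFun := fun s => ((s.1.1.1, s.1.2.1), ⟨(s.1.1.2, s.1.2.2), s.2⟩)
        invFun := fun t => ⟨((t.1.1, t.2.1.1), (t.1.2, t.2.1.2)), t.2.2⟩
        left_inv := fun _ => rfl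
        right_inv := fun _ => rfl }
  have cR : Nat.card {t // R t} = if c = 0 then 16 else 10 := by
    simp only [R]
    rw [Nat.card_eq_fintype_card]
    interval_cases c <;> decide
  rw [Nat.card_congr e, Nat.card_prod, cR]
  simp
  ring_nf

/-- The class number in terms of `T = P * Q = |A| / 4`, where `x1 ^ (2 * P) = x2 ^ (2 * Q) = 1`. -/
theorem main_count [Finite G] {c e1 e2 : ℕ} {x1 x2 y z1 z2 : G}
    (H : Core c e1 e2 x1 x2 y z1 z2) {P Q : ℕ} (hP : 0 < P)
    (hQ : 0 < Q) (o1 : x1 ^ (P * 2) = 1) (o2 : x2 ^ (Q * 2) = 1)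
    (hgen : closure ({x1, x2, y} : Set G) = ⊤)
    (hy : y ^ 4 ∈ closure ({x1, x2} : Set G))
    (hG : Nat.card G = 16 * (P * Q))
    (hN : Nat.card (closure ({x1, x2} : Set G)) = (P * 2) * (Q * 2) → NormalForm x1 x2 z1 z2)
    (hc1 : c ≤ 1) :
    (c = 0 → Nat.card (ConjClasses G) = 9 + P * Q) ∧
    (c = 1 → 8 * Nat.card (ConjClasses G) = 72 + 5 * (P * Q)) := by
  have := H.normal hgen
  set A := closure ({x1, x2} : Set G) with hA
  have hle : Nat.card A ≤ (P * 2) * (Q * 2) := H.card_le (by omega) (by omega) o1 o2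
  obtain ⟨hcard, χ, hχ, hker, hχy⟩ := exists_grading hA hgen hy (by rw [hG]; nlinarith)
  have hcA : Nat.card A = (P * 2) * (Q * 2) := by nlinarith
  have N := hN hcA
  have hχinv : ∀ g, χ (y⁻¹ * g) = χ g - 1 := by
    intro g
    have := hχ y (y⁻¹ * g)
    rw [mul_inv_cancel_left, hχy] at this
    rw [this]; ring
  have h1 : ∀ h, χ h = 1 → Nat.card {a // χ a = 0 ∧ Commute a h} = 2 := by
    intro h hh
    have hb : y⁻¹ * h ∈ A := (hker _).1 (by rw [hχinv, hh]; rfl)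
    have := H.cent1 N _ hb
    rw [mul_inv_cancel_left] at this
    simp only [hker, hA, this]
    exact (Nat.card_coe_set_eq _).trans (Core.ncard_two N)
  have h2 : ∀ h, χ h = 2 → Nat.card {a // χ a = 0 ∧ Commute a h} = 4 := by
    intro h hh
    have hb : y⁻¹ * (y⁻¹ * h) ∈ A := (hker _).1 (by rw [hχinv, hχinv, hh]; rfl)
    have := H.cent2 N _ hb
    rw [mul_inv_cancel_left, mul_inv_cancel_left] at this
    simp only [hker, hA, this]
    exact (Nat.card_coe_set_eq _).trans (H.ncard_four N)
  have key := comm_count χ hχ hχy hker h1 h2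
  rw [card_comm_eq_card_conjClasses_mul_card, card_comm_A H N hP hQ o1 o2 hcA hc1, hcA, hG,
    show P * 2 * (Q * 2) = 4 * (P * Q) by ring] at key
  have hT : 0 < P * Q := Nat.mul_pos hP hQ
  generalize P * Q = T at *
  constructor
  · intro h0
    rw [if_pos h0] at key
    refine Nat.eq_of_mul_eq_mul_right (show 0 < 16 * T by omega) ?_
    rw [key]; ring
  · intro h0
    rw [if_neg (by omega)] at key
    refine Nat.eq_of_mul_eq_mul_right (show 0 < 16 * T by omega) ?_
    rw [mul_assoc, key]; ring

end Rel

theorem fam8_numConjClasses (k ε m : ℕ) (hε : ε ≤ 1) (hm : 18 ≤ m) (hm' : m ≤ 27)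
    (hn : 7 ≤ 2 * k + 2 + ε) {G : Type*} [Group G] (x1 x2 y : G)
    (hG : IsFam8 k ε m x1 x2 y) :
    (m ∈ ([18, 19, 20, 23, 24, 25] : List ℕ) →
      Nat.card (ConjClasses G) = 9 + 2 ^ (2 * k + ε - 2)) ∧
    (m ∈ ([21, 22, 26, 27] : List ℕ) →
      Nat.card (ConjClasses G) = 9 + 5 * 2 ^ (2 * k + ε - 5)) := by
  obtain ⟨hcard, hgen, o1, o2, hy, r1, r2, r3⟩ := hG
  have : Finite G := Nat.finite_of_card_ne_zero (by rw [hcard]; positivity)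
  have hc1 : t3e m ≤ 1 := by unfold t3e; split_ifs <;> omega
  have key : (t3e m = 0 → Nat.card (ConjClasses G) = 9 + 2 ^ (2 * k + ε - 2)) ∧
      (t3e m = 1 → 8 * Nat.card (ConjClasses G) = 72 + 5 * 2 ^ (2 * k + ε - 2)) := by
    obtain rfl | rfl : ε = 0 ∨ ε = 1 := by omega
    · obtain ⟨l, rfl⟩ : ∃ l, k = l + 3 := ⟨k - 3, by omega⟩
      simp only [fam8z1, fam8z2, if_true] at hy r2 r3
      have H := core0 (by omega) o1 o2 r1 r2 r3
      simp only [show l + 3 - 1 = l + 2 by omega] at H hy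
      have p2 : 2 ^ (l + 3 + 0) = 2 ^ (l + 2) * 2 := by ring
      rw [p2] at o1
      rw [show 2 ^ (l + 3) = 2 ^ (l + 2) * 2 by ring] at o2
      rw [show 2 * (l + 3) + 0 - 2 = (l + 2) + (l + 2) by omega, pow_add]
      refine main_count H (by positivity) (by positivity) o1 o2 hgen
        (hy ▸ pow_mem H.z1_mem _) (by rw [hcard]; ring) (fun h => ?_) hc1
      exact nf0 H (by positivity) ⟨2 ^ l, by ring⟩ (by rwa [mul_comm]) (by rwa [mul_comm])
        (by rw [h]; ring)
    · obtain ⟨l, rfl⟩ : ∃ l, k = l + 2 := ⟨k - 2, by omega⟩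
      simp only [fam8z1, fam8z2, one_ne_zero, if_false] at hy r2 r3
      have H := core1 (by omega) o1 o2 r1 r2 r3
      simp only [show l + 2 - 1 = l + 1 by omega] at H hy
      have p1 : 2 ^ (l + 2) = 2 * 2 ^ (l + 1) := by ring
      rw [show 2 ^ (l + 2 + 1) = 2 ^ (l + 2) * 2 by ring] at o1
      rw [show 2 ^ (l + 2) = 2 ^ (l + 1) * 2 by ring] at o2
      rw [show 2 * (l + 2) + 1 - 2 = (l + 2) + (l + 1) by omega, pow_add]
      refine main_count H (by positivity) (by positivity) o1 o2 hgen
        (hy ▸ pow_mem H.z1_mem _) (by rw [hcard]; ring) (fun h => ?_) hc1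
      rw [p1] at H ⊢
      exact nf1 H (by positivity) ⟨2 ^ l, by ring⟩
        (by rw [← o1]; congr 1; ring) (by rwa [mul_comm]) (by rw [h]; ring)
  constructor
  · intro hmem
    refine key.1 ?_
    simp only [List.mem_cons, List.not_mem_nil, or_false] at hmem
    rcases hmem with rfl | rfl | rfl | rfl | rfl | rfl <;> decide
  · intro hmem
    have := key.2 (if_pos hmem)
    rw [show 2 * k + ε - 2 = (2 * k + ε - 5) + 3 by omega, pow_add] at this
    omega
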